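/- arXiv:2101.04911 — 3 statements merged into one kernel-verified Lean document; each statement's English description precedes it below -/
import Mathlib

section
/- Let α > −1 and n ≥ 1, let ψ be analytic on 𝔻, not identically 0, and φ a nonconstant analytic self-map of 𝔻, and suppose D_{ψ,φ,n} is bounded and J-symmetric on A_α². Then ψ^{(m)}(0) = 0 for every integer 0 ≤ m < n, and ψ^{(n)}(0) ≠ 0. -/
open Complex Metric Set

noncomputable section

/-- The open unit disk in `ℂ`. -/
def unitDisk : Set ℂ := Metric.ball 0 1

/-- `wb2 α j` is `β(j)² = j!·Γ(α+2)/Γ(j+α+2)`, the square of the norm of `z^j` in `A_α²`. -/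
def wb2 (α : ℝ) (j : ℕ) : ℝ :=
  (j.factorial : ℝ) * Real.Gamma (α + 2) / Real.Gamma ((j : ℝ) + α + 2)

/-- The `j`-th Taylor coefficient of `f` at `0`. -/
def tcoeff (f : ℂ → ℂ) (j : ℕ) : ℂ := iteratedDeriv j f 0 / (j.factorial : ℂ)

/-- An abstract model of the weighted Bergman space `A_α²`: a complex Hilbert space `H`
whose elements are (identified with) the analytic functions on the unit disk with
square-summable weighted Taylor coefficients, with the weighted `ℓ²` inner product. -/
structure BergmanModel (α : ℝ) (H : Type) [NormedAddCommGroup H]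
    [InnerProductSpace ℂ H] where
  emb : H →ₗ[ℂ] (ℂ → ℂ)
  analyticOn : ∀ f : H, AnalyticOnNhd ℂ (emb f) unitDisk
  summable_norm : ∀ f : H, Summable (fun j => ‖tcoeff (emb f) j‖ ^ 2 * wb2 α j)
  inj : ∀ f g : H, Set.EqOn (emb f) (emb g) unitDisk → f = g
  exists_rep : ∀ F : ℂ → ℂ, AnalyticOnNhd ℂ F unitDisk →
      Summable (fun j => ‖tcoeff F j‖ ^ 2 * wb2 α j) →
      ∃ f : H, Set.EqOn (emb f) F unitDisk
  inner_eq : ∀ f g : H,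
      (@inner ℂ H _ f g) =
        ∑' j : ℕ, (starRingEnd ℂ) (tcoeff (emb f) j) * tcoeff (emb g) j * (wb2 α j : ℂ)

/-- The derivative-evaluation kernel `K_w^{(m)}(z) = m!·z^m / (β(m)²·(1-conj(w)·z)^(m+α+2))`. -/
def kern (α : ℝ) (m : ℕ) (w z : ℂ) : ℂ :=
  (m.factorial : ℂ) * z ^ m /
    ((wb2 α m : ℂ) * (1 - (starRingEnd ℂ) w * z) ^ ((m : ℂ) + (α : ℂ) + 2))

lemma aux_nhds {z : ℂ} (hz : z ∈ unitDisk) : unitDisk ∈ nhds z :=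
  Metric.isOpen_ball.mem_nhds hz

lemma aux_zero : (0 : ℂ) ∈ unitDisk := by simp [unitDisk]

lemma aux_iter {f g : ℂ → ℂ} (h : Set.EqOn f g unitDisk) {z : ℂ} (hz : z ∈ unitDisk) (k : ℕ) :
    iteratedDeriv k f z = iteratedDeriv k g z :=
  Filter.EventuallyEq.iteratedDeriv_eq k (Filter.eventuallyEq_of_mem (aux_nhds hz) h)

lemma aux_tcoeff {f g : ℂ → ℂ} (h : Set.EqOn f g unitDisk) (k : ℕ) :
    tcoeff f k = tcoeff g k := by
  unfold tcoeff; rw [aux_iter h aux_zero]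

lemma aux_iter_conj (f : ℂ → ℂ) (k : ℕ) :
    iteratedDeriv k ((starRingEnd ℂ) ∘ f ∘ (starRingEnd ℂ)) =
      (starRingEnd ℂ) ∘ iteratedDeriv k f ∘ (starRingEnd ℂ) := by
  induction k with
  | zero => simp
  | succ k ih => rw [iteratedDeriv_succ, ih, deriv_conj_conj, iteratedDeriv_succ]

lemma aux_tcoeff_conj (f : ℂ → ℂ) (k : ℕ) :
    tcoeff ((starRingEnd ℂ) ∘ f ∘ (starRingEnd ℂ)) k = (starRingEnd ℂ) (tcoeff f k) := by
  unfold tcoeff; rw [aux_iter_conj]; simp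

lemma aux_tcoeff_pow (i k : ℕ) :
    tcoeff (fun z : ℂ => z ^ i) k = if k = i then 1 else 0 := by
  unfold tcoeff
  rw [iteratedDeriv_fun_pow_zero]
  have : (k.factorial : ℂ) ≠ 0 := by exact_mod_cast k.factorial_ne_zero
  split_ifs with h
  · subst h; field_simp
  · simp

lemma aux_wb2 {α : ℝ} (hα : -1 < α) (j : ℕ) : wb2 α j ≠ 0 := by
  have h1 : 0 < Real.Gamma (α + 2) := Real.Gamma_pos_of_pos (by linarith)
  have h2 : 0 < Real.Gamma ((j : ℝ) + α + 2) :=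
    Real.Gamma_pos_of_pos (by have : (0 : ℝ) ≤ j := j.cast_nonneg
                              linarith)
  have h3 : (0 : ℝ) < j.factorial := by exact_mod_cast j.factorial_pos
  unfold wb2; positivity

/-- If `D_{ψ,φ,n}` is bounded and `J`-symmetric on `A_α²`, then
`ψ⁽ᵐ⁾(0) = 0` for all `0 ≤ m < n`, and `ψ⁽ⁿ⁾(0) ≠ 0`. -/
theorem stmt_3 (α : ℝ) (hα : -1 < α) (n : ℕ) (hn : 1 ≤ n)
    (H : Type) [NormedAddCommGroup H] [InnerProductSpace ℂ H] [CompleteSpace H]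
    (M : BergmanModel α H)
    (ψ : ℂ → ℂ) (hψa : AnalyticOnNhd ℂ ψ unitDisk)
    (hψ0 : ∃ z ∈ unitDisk, ψ z ≠ 0)
    (φ : ℂ → ℂ) (hφa : AnalyticOnNhd ℂ φ unitDisk)
    (hφm : ∀ z ∈ unitDisk, φ z ∈ unitDisk)
    (hφnc : ∃ z ∈ unitDisk, ∃ w ∈ unitDisk, φ z ≠ φ w)
    (T : H →L[ℂ] H)
    (hT : ∀ f : H, ∀ z ∈ unitDisk,
      M.emb (T f) z = ψ z * iteratedDeriv n (M.emb f) (φ z))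
    -- `Jm` is the conjugation `(Jf)(z) = conj(f(conj z))` on the model `H`
    (Jm : H → H)
    (hJm : ∀ f : H, ∀ z ∈ unitDisk,
      M.emb (Jm f) z = (starRingEnd ℂ) (M.emb f ((starRingEnd ℂ) z)))
    -- `T` is `J`-symmetric: `J T* J = T`
    (hsym : ∀ f : H, Jm (ContinuousLinearMap.adjoint T (Jm f)) = T f) :
    (∀ m < n, iteratedDeriv m ψ 0 = 0) ∧ iteratedDeriv n ψ 0 ≠ 0 := by
  -- the monomials
  have hex : ∀ i : ℕ, ∃ e : H, Set.EqOn (M.emb e) (fun z => z ^ i) unitDisk := by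
    intro i
    refine M.exists_rep _ (fun z _ => by fun_prop) ?_
    refine summable_of_ne_finset_zero (s := {i}) ?_
    intro j hj
    rw [aux_tcoeff_pow, if_neg (by simpa using hj)]
    simp
  choose e he using hex
  have het : ∀ i k, tcoeff (M.emb (e i)) k = if k = i then 1 else 0 := fun i k => by
    rw [aux_tcoeff (he i), aux_tcoeff_pow]
  have hconj : ∀ z ∈ unitDisk, (starRingEnd ℂ) z ∈ unitDisk := by
    intro z hz; simpa [unitDisk] using hz
  have hJe : ∀ i, Jm (e i) = e i := by
    intro i
    apply M.inj
    intro z hz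
    rw [hJm _ z hz, he i (hconj z hz), he i hz]
    simp
  have hJt : ∀ f k, tcoeff (M.emb (Jm f)) k = (starRingEnd ℂ) (tcoeff (M.emb f) k) := by
    intro f k
    rw [← aux_tcoeff_conj]
    exact aux_tcoeff (fun z hz => hJm f z hz) k
  -- symmetry of the matrix
  have hmat : ∀ i j, tcoeff (M.emb (T (e i))) j * (wb2 α j : ℂ) =
      tcoeff (M.emb (T (e j))) i * (wb2 α i : ℂ) := by
    intro i j
    have h1 : tcoeff (M.emb (T (e i))) j =
        (starRingEnd ℂ) (tcoeff (M.emb (ContinuousLinearMap.adjoint T (e i))) j) := by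
      rw [← hJt, ← hsym (e i), hJe]
    have h2 := ContinuousLinearMap.adjoint_inner_right T (e j) (e i)
    rw [M.inner_eq, M.inner_eq, tsum_eq_single j, tsum_eq_single i] at h2
    · rw [het, het] at h2
      simp only [if_true, map_one, one_mul, mul_one] at h2
      rw [h1]
      have h3 := congrArg (starRingEnd ℂ) h2
      simpa using h3
    · intro k hk; rw [het, if_neg hk]; simp
    · intro k hk; rw [het, if_neg hk]; simp
  have hw : ∀ j, (wb2 α j : ℂ) ≠ 0 := fun j => by exact_mod_cast aux_wb2 hα j
  -- action of T on monomials
  have hTe : ∀ i, Set.EqOn (M.emb (T (e i)))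
      (fun z => ψ z * ((i.descFactorial n : ℂ) * φ z ^ (i - n))) unitDisk := by
    intro i z hz
    rw [hT _ z hz, aux_iter (he i) (hφm z hz), iteratedDeriv_pow]
  have hψt : ∀ j, tcoeff (M.emb (T (e n))) j = n.factorial * tcoeff ψ j := by
    intro j
    have : Set.EqOn (M.emb (T (e n))) (fun z => (n.factorial : ℂ) * ψ z) unitDisk := by
      intro z hz
      rw [hTe n hz]
      simp [Nat.descFactorial_self, mul_comm]
    rw [aux_tcoeff this]
    unfold tcoeff
    rw [iteratedDeriv_const_mul_field]
    ring
  have hnf : (n.factorial : ℂ) ≠ 0 := by exact_mod_cast n.factorial_ne_zero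
  have hit : ∀ j, tcoeff ψ j = 0 → iteratedDeriv j ψ 0 = 0 := by
    intro j hj
    have : (j.factorial : ℂ) ≠ 0 := by exact_mod_cast j.factorial_ne_zero
    unfold tcoeff at hj
    simpa [this] using hj
  have hlow : ∀ m < n, iteratedDeriv m ψ 0 = 0 := by
    intro m hm
    apply hit
    have h1 := hmat n m
    have h2 : tcoeff (M.emb (T (e m))) n = 0 := by
      have : Set.EqOn (M.emb (T (e m))) (fun _ => (0 : ℂ)) unitDisk := by
        intro z hz
        rw [hTe m hz]
        simp [Nat.descFactorial_of_lt hm]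
      rw [aux_tcoeff this]
      simp [tcoeff]
    rw [h2, hψt, zero_mul] at h1
    simpa [hw, hnf] using h1
  refine ⟨hlow, fun hz => ?_⟩
  have hψ00 : AnalyticAt ℂ ψ 0 := hψa 0 aux_zero
  have hord : ((n + 1 : ℕ) : ℕ∞) ≤ analyticOrderAt ψ 0 := by
    rw [natCast_le_analyticOrderAt_iff_iteratedDeriv_eq_zero hψ00]
    intro i hi
    rcases Nat.lt_succ_iff_lt_or_eq.mp hi with h | h
    · exact hlow i h
    · rw [h]; exact hz
  have hall : ∀ i, iteratedDeriv i ψ 0 = 0 := by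
    intro i
    apply hit
    have h1 := hmat n i
    have h2 : tcoeff (M.emb (T (e i))) n = 0 := by
      rw [aux_tcoeff (hTe i)]
      have hg : AnalyticAt ℂ (fun z => (i.descFactorial n : ℂ) * φ z ^ (i - n)) 0 :=
        analyticAt_const.mul ((hφa 0 aux_zero).pow _)
      have h3 : ((n + 1 : ℕ) : ℕ∞) ≤ analyticOrderAt
          (fun z => ψ z * ((i.descFactorial n : ℂ) * φ z ^ (i - n))) 0 := by
        have := analyticOrderAt_mul hψ00 hg
        refine le_trans (hord.trans le_self_add) this.ge
      have h4 := (natCast_le_analyticOrderAt_iff_iteratedDeriv_eq_zero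
        (hψ00.fun_mul hg)).mp h3 n (Nat.lt_succ_self n)
      unfold tcoeff
      rw [h4, zero_div]
    rw [h2, hψt, zero_mul] at h1
    simpa [hw, hnf] using h1
  have htop : analyticOrderAt ψ 0 = ⊤ := by
    rw [ENat.eq_top_iff_forall_ge]
    intro m
    rw [natCast_le_analyticOrderAt_iff_iteratedDeriv_eq_zero hψ00]
    exact fun i _ => hall i
  rw [analyticOrderAt_eq_top] at htop
  obtain ⟨z, hz1, hz2⟩ := hψ0
  exact hz2 (hψa.eqOn_zero_of_preconnected_of_eventuallyEq_zero
    (convex_ball (0 : ℂ) 1).isPreconnected aux_zero htop hz1)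
end
end

section
/- Let α > −1 and n ≥ 1, let ψ be analytic on 𝔻, not identically 0, and φ a nonconstant analytic self-map of 𝔻, and suppose D_{ψ,φ,n} is bounded and J-symmetric on A_α². Then ψ(w) ≠ 0 for every w ∈ 𝔻 \ {0}. -/
open Complex Metric Set

noncomputable section

open Filter Topology in
theorem wb2_pos {α : ℝ} (hα : -1 < α) (j : ℕ) : 0 < wb2 α j := by
  unfold wb2
  have hj : (0:ℝ) ≤ j := Nat.cast_nonneg j
  have h1 := Real.Gamma_pos_of_pos (show 0 < α + 2 by linarith)
  have h2 := Real.Gamma_pos_of_pos (show 0 < (j:ℝ) + α + 2 by linarith)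
  have h3 : (0:ℝ) < j.factorial := by exact_mod_cast j.factorial_pos
  positivity

theorem wb2_ratio {α : ℝ} (hα : -1 < α) (j : ℕ) :
    wb2 α j / wb2 α (j+1) = ((j:ℝ) + α + 2) / ((j:ℝ) + 1) := by
  have hj : (0:ℝ) ≤ j := Nat.cast_nonneg j
  have h1 := (Real.Gamma_pos_of_pos (show 0 < α + 2 by linarith)).ne'
  have h0 : (j:ℝ) + α + 2 ≠ 0 := by linarith
  have h2 := (Real.Gamma_pos_of_pos (show 0 < (j:ℝ) + α + 2 by linarith)).ne'
  have h3 : (j.factorial : ℝ) ≠ 0 := by exact_mod_cast j.factorial_ne_zero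
  have h4 : (j:ℝ) + 1 ≠ 0 := by linarith
  unfold wb2
  have h5 : Real.Gamma (((j+1:ℕ):ℝ) + α + 2) = ((j:ℝ) + α + 2) * Real.Gamma ((j:ℝ) + α + 2) := by
    rw [← Real.Gamma_add_one h0]; congr 1; push_cast; ring
  rw [h5, Nat.factorial_succ]
  push_cast
  field_simp

open Filter Topology in
theorem summable_wb2 {α : ℝ} (hα : -1 < α) {r : ℝ} (hr0 : 0 < r) (hr : r < 1) :
    Summable (fun j : ℕ => r ^ j / wb2 α j) := by
  refine summable_of_ratio_test_tendsto_lt_one hr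
    (Eventually.of_forall fun j => (div_pos (pow_pos hr0 j) (wb2_pos hα j)).ne') ?_
  have h : ∀ j : ℕ, ‖r ^ (j+1) / wb2 α (j+1)‖ / ‖r ^ j / wb2 α j‖
      = r * (1 + (α + 1) * (1 / ((j:ℝ) + 1))) := by
    intro j
    have p1 := wb2_pos hα j
    have p2 := wb2_pos hα (j+1)
    have hj : (0:ℝ) < (j:ℝ) + 1 := by positivity
    rw [Real.norm_of_nonneg (by positivity), Real.norm_of_nonneg (by positivity)]
    have : r ^ (j+1) / wb2 α (j+1) / (r ^ j / wb2 α j) = r * (wb2 α j / wb2 α (j+1)) := by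
      field_simp
      ring
    rw [this, wb2_ratio hα]
    field_simp
    ring
  simp_rw [h]
  have := ((tendsto_one_div_add_atTop_nhds_zero_nat (𝕜 := ℝ)).const_mul (α+1)).const_add 1
  simpa using this.const_mul r

theorem tcoeff_congr {f g : ℂ → ℂ} (h : Set.EqOn f g unitDisk) (j : ℕ) :
    tcoeff f j = tcoeff g j := by
  unfold tcoeff
  rw [h.iteratedDeriv_of_isOpen Metric.isOpen_ball j (by simp [unitDisk])]

/-- Existence of the reproducing kernel, with its Taylor coefficients. -/
theorem exists_ker {α : ℝ} (hα : -1 < α) {H : Type} [NormedAddCommGroup H]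
    [InnerProductSpace ℂ H] (M : BergmanModel α H) {v : ℂ} (hv : v ∈ unitDisk) (hv0 : v ≠ 0) :
    ∃ k : H, (∀ j, tcoeff (M.emb k) j = v ^ j / (wb2 α j : ℂ)) ∧
      ∀ z ∈ unitDisk, M.emb k z = ∑' j : ℕ, v ^ j / (wb2 α j : ℂ) * z ^ j := by
  have hv1 : ‖v‖ < 1 := by simpa [unitDisk] using hv
  have hvp : 0 < ‖v‖ := norm_pos_iff.2 hv0
  set a : ℕ → ℂ := fun j => v ^ j / (wb2 α j : ℂ) with ha
  have hna : ∀ j, ‖a j‖ = ‖v‖ ^ j / wb2 α j := by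
    intro j
    simp [ha, abs_of_pos (wb2_pos hα j)]
  set p := FormalMultilinearSeries.ofScalars ℂ a with hp
  have hrad : (1 : ENNReal) ≤ p.radius := by
    have := p.le_radius_of_summable_norm (r := 1) (by
      simp only [hp, FormalMultilinearSeries.ofScalars_norm, hna]
      simpa using summable_wb2 hα hvp hv1)
    simpa using this
  have hball : HasFPowerSeriesOnBall p.sum p 0 1 :=
    (p.hasFPowerSeriesOnBall (lt_of_lt_of_le one_pos hrad)).mono one_pos hrad
  have hsum : ∀ z, p.sum z = ∑' j : ℕ, a j * z ^ j := by
    intro z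
    have := FormalMultilinearSeries.ofScalars_sum_eq (E := ℂ) a z
    simpa [FormalMultilinearSeries.ofScalarsSum] using this
  have han : AnalyticOnNhd ℂ p.sum unitDisk := by
    have h := hball.analyticOnNhd
    intro z hz
    apply h z
    have hz1 : ‖z‖ < 1 := by simpa [unitDisk] using hz
    rw [Metric.mem_eball, edist_zero_right, ← ofReal_norm, ENNReal.ofReal_lt_one]
    exact hz1
  have htc : ∀ j, tcoeff p.sum j = a j := by
    intro j
    have h := hball.factorial_smul 1 j
    have h3 : (j.factorial : ℂ) ≠ 0 := by exact_mod_cast j.factorial_ne_zero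
    unfold tcoeff
    rw [iteratedDeriv_eq_iteratedFDeriv, ← h]
    simp [hp, FormalMultilinearSeries.ofScalars_apply_eq]
    field_simp
  obtain ⟨k, hk⟩ := M.exists_rep p.sum han (by
    have hs := summable_wb2 hα (r := ‖v‖^2) (by positivity) (by nlinarith)
    refine hs.congr fun j => ?_
    have := wb2_pos hα j
    rw [htc, hna]
    field_simp
    ring)
  refine ⟨k, fun j => ?_, fun z hz => ?_⟩
  · rw [tcoeff_congr hk, htc]
  · rw [hk hz, hsum]

/-- Reproducing property. -/
theorem inner_ker {α : ℝ} (hα : -1 < α) {H : Type} [NormedAddCommGroup H]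
    [InnerProductSpace ℂ H] (M : BergmanModel α H) {v : ℂ} (hv : v ∈ unitDisk) (k : H)
    (hk : ∀ j, tcoeff (M.emb k) j = (starRingEnd ℂ v) ^ j / (wb2 α j : ℂ)) (f : H) :
    @inner ℂ H _ k f = M.emb f v := by
  rw [M.inner_eq]
  have h := Complex.hasSum_taylorSeries_on_ball (r := 1) (c := 0) (f := M.emb f)
    ((M.analyticOn f).differentiableOn) (z := v) hv
  rw [← h.tsum_eq]
  refine tsum_congr fun j => ?_
  have : (wb2 α j : ℂ) ≠ 0 := by exact_mod_cast (wb2_pos hα j).ne'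
  rw [hk]
  simp [tcoeff]
  field_simp

/-- If `D_{ψ,φ,n}` is bounded and `J`-symmetric on `A_α²`, then
`ψ(w) ≠ 0` for every `w ∈ 𝔻 \ {0}`. -/
theorem stmt_4 (α : ℝ) (hα : -1 < α) (n : ℕ) (hn : 1 ≤ n)
    (H : Type) [NormedAddCommGroup H] [InnerProductSpace ℂ H] [CompleteSpace H]
    (M : BergmanModel α H)
    (ψ : ℂ → ℂ) (hψa : AnalyticOnNhd ℂ ψ unitDisk)
    (hψ0 : ∃ z ∈ unitDisk, ψ z ≠ 0)
    (φ : ℂ → ℂ) (hφa : AnalyticOnNhd ℂ φ unitDisk)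
    (hφm : ∀ z ∈ unitDisk, φ z ∈ unitDisk)
    (hφnc : ∃ z ∈ unitDisk, ∃ w ∈ unitDisk, φ z ≠ φ w)
    (T : H →L[ℂ] H)
    (hT : ∀ f : H, ∀ z ∈ unitDisk,
      M.emb (T f) z = ψ z * iteratedDeriv n (M.emb f) (φ z))
    (Jm : H → H)
    (hJm : ∀ f : H, ∀ z ∈ unitDisk,
      M.emb (Jm f) z = (starRingEnd ℂ) (M.emb f ((starRingEnd ℂ) z)))
    (hsym : ∀ f : H, Jm (ContinuousLinearMap.adjoint T (Jm f)) = T f) :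
    ∀ w ∈ unitDisk, w ≠ 0 → ψ w ≠ 0 := by
  intro v hv hv0 hψv
  have hcv : starRingEnd ℂ v ∈ unitDisk := by simpa [unitDisk] using hv
  have hcv0 : starRingEnd ℂ v ≠ 0 := by simpa using hv0
  obtain ⟨k1, hk1, hk1'⟩ := exists_ker hα M hcv hcv0
  obtain ⟨k2, hk2, hk2'⟩ := exists_ker hα M hv hv0
  have hJ : Jm k2 = k1 := by
    apply M.inj
    intro z hz
    rw [hJm k2 z hz, hk1' z hz, hk2' _ (by simpa [unitDisk] using hz), Complex.conj_tsum]
    simp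
  have hadj : ContinuousLinearMap.adjoint T k1 = 0 := by
    refine ext_inner_right ℂ fun f => ?_
    rw [ContinuousLinearMap.adjoint_inner_left, inner_ker hα M hv k1 hk1, hT f v hv, hψv]
    simp
  have hT0 : ∀ z ∈ unitDisk, ψ z * iteratedDeriv n (M.emb k2) (φ z) = 0 := by
    intro z hz
    rw [← hT k2 z hz, ← hsym k2, hJ, hadj, hJm 0 z hz]
    simp
  set G := iteratedDeriv n (M.emb k2) with hG
  have hGa : AnalyticOnNhd ℂ G unitDisk := by
    rw [hG, iteratedDeriv_eq_iterate]
    exact (M.analyticOn k2).iterated_deriv n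
  have hpre : IsPreconnected unitDisk := (convex_ball (0:ℂ) 1).isPreconnected
  have hopen : IsOpen unitDisk := Metric.isOpen_ball
  obtain ⟨z0, hz0, hψz0⟩ := hψ0
  have hcomp : AnalyticOnNhd ℂ (G ∘ φ) unitDisk := hGa.comp hφa hφm
  have hGφ : Set.EqOn (G ∘ φ) 0 unitDisk := by
    apply hcomp.eqOn_zero_of_preconnected_of_eventuallyEq_zero hpre hz0
    filter_upwards [hopen.mem_nhds hz0,
      (hψa z0 hz0).continuousAt.eventually_ne hψz0] with z hz hne
    exact (mul_eq_zero.1 (hT0 z hz)).resolve_left hne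
  have himg : IsOpen (Set.image φ unitDisk) := by
    rcases hφa.is_constant_or_isOpen hpre with ⟨c, hc⟩ | h
    · obtain ⟨z, hz, w, hw, hne⟩ := hφnc
      exact absurd ((hc z hz).trans (hc w hw).symm) hne
    · exact h _ subset_rfl hopen
  have hG0 : Set.EqOn G 0 unitDisk := by
    apply hGa.eqOn_zero_of_preconnected_of_eventuallyEq_zero hpre (hφm z0 hz0)
    filter_upwards [himg.mem_nhds (Set.mem_image_of_mem φ hz0)] with y hy
    obtain ⟨z, hz, rfl⟩ := hy
    exact hGφ hz
  have h0 : G 0 = 0 := hG0 (by simp [unitDisk])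
  have h1 := hk2 n
  unfold tcoeff at h1
  rw [← hG, h0, zero_div] at h1
  have h2 : (wb2 α n : ℂ) ≠ 0 := by exact_mod_cast (wb2_pos hα n).ne'
  exact div_ne_zero (pow_ne_zero n hv0) h2 h1.symm
end
end

section
/- Let α > −1 and n ≥ 1, and suppose D_{ψ,φ,n} is bounded and self-adjoint on A_α², so that ψ(z) = a z^n/(n! (1 − conj(c) z)^{n+α+2}) and φ(z) = c + b z/(1 − conj(c) z) with a, b nonzero real numbers and c ∈ 𝔻. If c = 0, then D_{ψ,φ,n} is J-symmetric; and if c ≠ 0, then D_{ψ,φ,n} is C_{e^{−2iθ}z}J-symmetric, where θ = Arg(c) and C_{e^{−2iθ}z} f(z) = f(e^{−2iθ} z). -/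
open Complex Metric Set

noncomputable section

/-- The argument of a complex number, normalized to lie in `[0, 2π)` (with `Arg 0 = 0`). -/
def arg2pi (c : ℂ) : ℝ :=
  if Complex.arg c < 0 then Complex.arg c + 2 * Real.pi else Complex.arg c


theorem conj_iter (f : ℂ → ℂ) (l : ℂ) (k : ℕ) :
    iteratedDeriv k (fun u => (starRingEnd ℂ) (f ((starRingEnd ℂ) (l * u)))) =
      fun u => l ^ k * (starRingEnd ℂ) (iteratedDeriv k f ((starRingEnd ℂ) (l * u))) := by
  induction k with
  | zero => simp
  | succ k ih =>
    rw [iteratedDeriv_succ, ih, iteratedDeriv_succ]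
    funext u
    rw [deriv_const_mul_field]
    have h1 := deriv_comp_mul_left l
      (fun v => (starRingEnd ℂ) (iteratedDeriv k f ((starRingEnd ℂ) v))) u
    have h2 := congrFun (deriv_conj_conj (f := iteratedDeriv k f)) (l * u)
    have h3 : ((starRingEnd ℂ) ∘ (iteratedDeriv k f) ∘ (starRingEnd ℂ)) =
      (fun v => (starRingEnd ℂ) (iteratedDeriv k f ((starRingEnd ℂ) v))) := rfl
    rw [h3] at h2
    rw [h1, h2, smul_eq_mul]
    simp only [Function.comp_apply]
    ring

theorem key13 (α : ℝ) (n : ℕ)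
    (H : Type) [NormedAddCommGroup H] [InnerProductSpace ℂ H]
    (M : BergmanModel α H)
    (a b : ℝ) (c : ℂ) (hc : c ∈ unitDisk)
    (ψ φ : ℂ → ℂ)
    (hψ : ∀ z ∈ unitDisk, ψ z = (a : ℂ) * z ^ n /
      ((n.factorial : ℂ) * (1 - (starRingEnd ℂ) c * z) ^ ((n : ℂ) + (α : ℂ) + 2)))
    (hφ : ∀ z ∈ unitDisk, φ z = c + (b : ℂ) * z / (1 - (starRingEnd ℂ) c * z))
    (hφm : ∀ z ∈ unitDisk, φ z ∈ unitDisk)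
    (T : H →L[ℂ] H)
    (hT : ∀ f : H, ∀ z ∈ unitDisk,
      M.emb (T f) z = ψ z * iteratedDeriv n (M.emb f) (φ z))
    (l : ℂ) (hl : (starRingEnd ℂ) l * l = 1) (hlc : l * c = (starRingEnd ℂ) c)
    (Cm : H → H)
    (hC : ∀ f : H, ∀ z ∈ unitDisk,
        M.emb (Cm f) z = (starRingEnd ℂ) (M.emb f ((starRingEnd ℂ) (l * z))))
    (f : H) : Cm (T (Cm f)) = T f := by
  apply M.inj
  intro z hz
  have hln : ‖l‖ = 1 := by
    have h := congrArg norm hl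
    rw [norm_mul, RCLike.norm_conj, norm_one] at h
    nlinarith [norm_nonneg l]
  have hz' : ‖z‖ < 1 := by simpa [unitDisk] using hz
  have hc' : ‖c‖ < 1 := by simpa [unitDisk] using hc
  have hw : (starRingEnd ℂ) (l * z) ∈ unitDisk := by
    simpa [unitDisk, hln] using hz'
  have hre : 0 < (1 - (starRingEnd ℂ) c * z).re := by
    have h1 : ((starRingEnd ℂ) c * z).re ≤ ‖(starRingEnd ℂ) c * z‖ := Complex.re_le_norm _
    rw [norm_mul, RCLike.norm_conj] at h1
    have h2 : ‖c‖ * ‖z‖ < 1 := by nlinarith [norm_nonneg c, norm_nonneg z]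
    simp only [Complex.sub_re, Complex.one_re]
    linarith
  have harg : (1 - (starRingEnd ℂ) c * z).arg ≠ Real.pi := by
    intro h
    have := (Complex.arg_eq_pi_iff.1 h).1
    linarith
  have e1 : (starRingEnd ℂ) l * (starRingEnd ℂ) c = c := by
    rw [← hlc, ← mul_assoc, hl, one_mul]
  have hconj : (1 - (starRingEnd ℂ) c * (starRingEnd ℂ) (l * z)) =
      (starRingEnd ℂ) (1 - (starRingEnd ℂ) c * z) := by
    simp only [map_sub, map_one, map_mul, Complex.conj_conj]
    linear_combination (-(starRingEnd ℂ) z) * e1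
  have hev : M.emb (Cm f) =ᶠ[nhds (φ ((starRingEnd ℂ) (l * z)))]
      (fun u => (starRingEnd ℂ) (M.emb f ((starRingEnd ℂ) (l * u)))) :=
    Filter.eventuallyEq_of_mem (Metric.isOpen_ball.mem_nhds (hφm _ hw)) (hC f)
  have hφw : (starRingEnd ℂ) (l * φ ((starRingEnd ℂ) (l * z))) = φ z := by
    rw [hφ _ hw, hφ z hz, hconj]
    simp only [map_mul, map_add, map_div₀, Complex.conj_conj, Complex.conj_ofReal]
    rw [mul_add, e1]
    congr 1
    linear_combination ((b : ℂ) * z / (1 - (starRingEnd ℂ) c * z)) * hl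
  have hψw : (starRingEnd ℂ) (ψ ((starRingEnd ℂ) (l * z))) = l ^ n * ψ z := by
    have hexp : ((n : ℂ) + (α : ℂ) + 2) = (starRingEnd ℂ) ((n : ℂ) + (α : ℂ) + 2) := by
      simp [map_ofNat]
    rw [hψ _ hw, hψ z hz, hconj]
    have := Complex.conj_cpow (1 - (starRingEnd ℂ) c * z) ((n : ℂ) + (α : ℂ) + 2) harg
    rw [← hexp] at this
    rw [this]
    simp only [map_mul, map_div₀, map_pow, Complex.conj_conj, Complex.conj_ofReal, map_natCast]
    ring
  rw [hC _ z hz, hT _ _ hw, hev.iteratedDeriv_eq n, conj_iter]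
  simp only
  rw [hφw, hT f z hz, map_mul, hψw, map_mul, Complex.conj_conj, map_pow]
  have : (starRingEnd ℂ) l ^ n * l ^ n = 1 := by rw [← mul_pow, hl, one_pow]
  linear_combination (ψ z * iteratedDeriv n (M.emb f) (φ z)) * this

/-- If `D_{ψ,φ,n}` is bounded and self-adjoint on `A_α²`, with
`ψ(z) = a z^n/(n!(1-conj(c)z)^{n+α+2})` and `φ(z) = c + bz/(1-conj(c)z)` for nonzero
reals `a, b` and `c ∈ 𝔻`, then: if `c = 0` it is `J`-symmetric, and if `c ≠ 0` it is
`C_{e^{-2iθ}z}J`-symmetric, where `θ = Arg(c)`. -/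
theorem stmt_13 (α : ℝ) (hα : -1 < α) (n : ℕ) (hn : 1 ≤ n)
    (H : Type) [NormedAddCommGroup H] [InnerProductSpace ℂ H] [CompleteSpace H]
    (M : BergmanModel α H)
    (a b : ℝ) (ha : a ≠ 0) (hb : b ≠ 0) (c : ℂ) (hc : c ∈ unitDisk)
    (ψ φ : ℂ → ℂ)
    (hψ : ∀ z ∈ unitDisk, ψ z = (a : ℂ) * z ^ n /
      ((n.factorial : ℂ) * (1 - (starRingEnd ℂ) c * z) ^ ((n : ℂ) + (α : ℂ) + 2)))
    (hφ : ∀ z ∈ unitDisk, φ z = c + (b : ℂ) * z / (1 - (starRingEnd ℂ) c * z))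
    (hφm : ∀ z ∈ unitDisk, φ z ∈ unitDisk)
    (T : H →L[ℂ] H)
    (hT : ∀ f : H, ∀ z ∈ unitDisk,
      M.emb (T f) z = ψ z * iteratedDeriv n (M.emb f) (φ z))
    (hsa : ContinuousLinearMap.adjoint T = T) :
    (c = 0 → ∀ Jm : H → H,
      (∀ f : H, ∀ z ∈ unitDisk,
        M.emb (Jm f) z = (starRingEnd ℂ) (M.emb f ((starRingEnd ℂ) z))) →
      ∀ f : H, Jm (ContinuousLinearMap.adjoint T (Jm f)) = T f) ∧
    (c ≠ 0 → ∀ Cm : H → H,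
      (∀ f : H, ∀ z ∈ unitDisk,
        M.emb (Cm f) z = (starRingEnd ℂ) (M.emb f
          ((starRingEnd ℂ) (Complex.exp (-(2 * (arg2pi c : ℂ)) * Complex.I) * z)))) →
      ∀ f : H, Cm (ContinuousLinearMap.adjoint T (Cm f)) = T f) := by
  rw [hsa]
  constructor
  · intro h0 Jm hJ f
    exact key13 α n H M a b c hc ψ φ hψ hφ hφm T hT 1 (by simp) (by simp [h0]) Jm
      (by simpa using hJ) f
  · intro h0 Cm hC f
    refine key13 α n H M a b c hc ψ φ hψ hφ hφm T hT _ ?_ ?_ Cm hC f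
    · rw [← Complex.exp_conj, ← Complex.exp_add]
      simp [map_ofNat]
    · have he : Complex.exp ((arg2pi c : ℂ) * Complex.I) =
          Complex.exp ((Complex.arg c : ℂ) * Complex.I) := by
        unfold arg2pi
        split_ifs
        · push_cast
          rw [add_mul, Complex.exp_add, Complex.exp_two_pi_mul_I, mul_one]
        · rfl
      have h1 := Complex.norm_mul_exp_arg_mul_I c
      rw [← he] at h1
      generalize arg2pi c = t at *
      generalize ‖c‖ = r at *
      rw [← h1]
      rw [map_mul, ← Complex.exp_conj, Complex.conj_ofReal, mul_left_comm, ← Complex.exp_add]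
      congr 2
      simp
      ring
end
end
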